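/- Let F be an algebraically closed field with characteristic ≠ 2, and let b ∈ F with b ≠ 0. Then the automorphism group of the algebra E2(b) with MSC [[1,0,0,b],[1,0,0,0]] is trivial: Aut(E2(b)) = {I}. -/

import Mathlib

open Matrix Kronecker

variable {F : Type*}

/-- The Kronecker (tensor) product of two `2 × 2` matrices, realized as a `4 × 4` matrix;
rows/columns are indexed in row-major order by the pairs `(1,1), (1,2), (2,1), (2,2)`. -/
def kron [CommRing F] (g h : Matrix (Fin 2) (Fin 2) F) : Matrix (Fin 4) (Fin 4) F :=
  Matrix.reindex finProdFinEquiv finProdFinEquiv (g ⊗ₖ h)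

/-- Two `2`-dimensional algebras given by matrices of structure constants `A, B`
are isomorphic iff `B = g · A · (g⁻¹ ⊗ g⁻¹)` for some `g ∈ GL(2, F)`. -/
def Isomorphic [Field F] (A B : Matrix (Fin 2) (Fin 4) F) : Prop :=
  ∃ g : GL (Fin 2) F,
    B = (g : Matrix (Fin 2) (Fin 2) F) * A *
        kron ((↑(g⁻¹) : Matrix (Fin 2) (Fin 2) F)) ((↑(g⁻¹) : Matrix (Fin 2) (Fin 2) F))

/-- The automorphism group of the algebra with MSC `E`, as a set of (invertible) `2 × 2`
matrices: `Aut(E) = {g ∈ GL(2,F) : g·E = E·(g ⊗ g)}`. -/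
def Aut [Field F] (E : Matrix (Fin 2) (Fin 4) F) : Set (Matrix (Fin 2) (Fin 2) F) :=
  {g | IsUnit g ∧ g * E = E * kron g g}

/-- The derivation algebra of the algebra with MSC `E`:
`Der(E) = { D : E·(D ⊗ I + I ⊗ D) = D·E }`. -/
def Der [Field F] (E : Matrix (Fin 2) (Fin 4) F) : Set (Matrix (Fin 2) (Fin 2) F) :=
  {D | E * (kron D 1 + kron 1 D) = D * E}

/-!
In the basis `e₀, e₁` the algebra `E₂(b)` has `e₀ e₁ = e₁ e₀ = 0`, so its product is
`u · v = A (u ∘ v)`, where `∘` is the entrywise product and the columns of `A = !![1, b; 1, 0]` are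
the squares `e₀²`, `e₁²`. As `det A = -b ≠ 0`, two vectors annihilate each other only if their
entrywise product is zero. The images of `e₀` and `e₁` under an automorphism annihilate each other
and are independent, so they lie on the two coordinate axes. Comparing the images of the squares
then shows that the axes are not swapped and that both scaling factors are `1`.
-/

theorem kron_one_one {R : Type*} [CommRing R] : kron (1 : Matrix (Fin 2) (Fin 2) R) 1 = 1 := by
  simp [kron]

theorem kron_apply {R : Type*} [CommRing R] (g h : Matrix (Fin 2) (Fin 2) R) (i j k l : Fin 2) :
    kron g h (finProdFinEquiv (i, j)) (finProdFinEquiv (k, l)) = g i k * h j l := by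
  simp [kron]

theorem one_mem_aut {K : Type*} [Field K] (E : Matrix (Fin 2) (Fin 4) K) : 1 ∈ Aut E :=
  ⟨isUnit_one, by rw [kron_one_one, Matrix.one_mul, Matrix.mul_one]⟩

theorem msc_ext_iff {R : Type*} {E E' : Matrix (Fin 2) (Fin 4) R} :
    E = E' ↔ ∀ i k l : Fin 2, E i (finProdFinEquiv (k, l)) = E' i (finProdFinEquiv (k, l)) := by
  rw [← Matrix.ext_iff]
  exact forall_congr' fun i ↦
    (finProdFinEquiv (m := 2) (n := 2)).forall_congr_right.symm.trans Prod.forall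

/-- The matrix of structure constants of the two-dimensional evolution algebra with structure
matrix `A`: the basis vectors satisfy `e₀ e₁ = e₁ e₀ = 0`, and `eₖ²` is column `k` of `A`. -/
def evolutionMSC {R : Type*} [Zero R] (A : Matrix (Fin 2) (Fin 2) R) :
    Matrix (Fin 2) (Fin 4) R :=
  !![A 0 0, 0, 0, A 0 1; A 1 0, 0, 0, A 1 1]

theorem evolutionMSC_apply {R : Type*} [Zero R] (A : Matrix (Fin 2) (Fin 2) R) (i k l : Fin 2) :
    evolutionMSC A i (finProdFinEquiv (k, l)) = if k = l then A i k else 0 := by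
  fin_cases i <;> fin_cases k <;> fin_cases l <;> rfl

theorem mul_evolutionMSC {R : Type*} [NonUnitalNonAssocSemiring R]
    (g A : Matrix (Fin 2) (Fin 2) R) :
    g * evolutionMSC A = evolutionMSC (g * A) := by
  refine msc_ext_iff.mpr fun i k l ↦ ?_
  simp only [Matrix.mul_apply, evolutionMSC_apply, mul_ite, mul_zero, Finset.sum_ite_irrel,
    Finset.sum_const_zero]

theorem evolutionMSC_mul_kron_apply {R : Type*} [CommRing R]
    (A g h : Matrix (Fin 2) (Fin 2) R) (i k l : Fin 2) :
    (evolutionMSC A * kron g h) i (finProdFinEquiv (k, l)) = (A *ᵥ (g.col k * h.col l)) i := by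
  rw [Matrix.mul_apply, ← (finProdFinEquiv (m := 2) (n := 2)).sum_comp, Fintype.sum_prod_type]
  simp only [evolutionMSC_apply, kron_apply]
  simp [Matrix.mulVec, dotProduct]

theorem mul_evolutionMSC_eq_mul_kron_iff {R : Type*} [CommRing R]
    (A g : Matrix (Fin 2) (Fin 2) R) :
    g * evolutionMSC A = evolutionMSC A * kron g g ↔
      A *ᵥ (g.col 0 * g.col 1) = 0 ∧ g * A = A * (g ⊙ g) := by
  have hsq (i k : Fin 2) : (A *ᵥ (g.col k * g.col k)) i = (A * (g ⊙ g)) i k := rfl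
  rw [mul_evolutionMSC, msc_ext_iff, ← Matrix.ext_iff, funext_iff]
  simp only [evolutionMSC_apply, evolutionMSC_mul_kron_apply, Fin.forall_fin_two, hsq,
    mul_comm (g.col 1), Pi.zero_apply, if_true, if_neg zero_ne_one, if_neg one_ne_zero]
  grind

theorem mem_aut_evolutionMSC_iff {K : Type*} [Field K] {A : Matrix (Fin 2) (Fin 2) K}
    (hA : A.det ≠ 0) (g : Matrix (Fin 2) (Fin 2) K) :
    g ∈ Aut (evolutionMSC A) ↔ IsUnit g ∧ g.col 0 * g.col 1 = 0 ∧ g * A = A * (g ⊙ g) := by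
  have hinj : A *ᵥ (g.col 0 * g.col 1) = 0 ↔ g.col 0 * g.col 1 = 0 :=
    ⟨Matrix.eq_zero_of_mulVec_eq_zero hA, fun h ↦ by rw [h, Matrix.mulVec_zero]⟩
  rw [← hinj, ← mul_evolutionMSC_eq_mul_kron_iff]
  rfl

theorem eq_diagonal_or_eq_antidiagonal {R : Type*} [CommRing R] [NoZeroDivisors R]
    {g : Matrix (Fin 2) (Fin 2) R} (hdet : g.det ≠ 0) (hcol : g.col 0 * g.col 1 = 0) :
    g = !![g 0 0, 0; 0, g 1 1] ∨ g = !![0, g 0 1; g 1 0, 0] := by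
  have hrow (i : Fin 2) : g i 0 = 0 ∨ g i 1 = 0 := mul_eq_zero.mp (congrFun hcol i)
  rw [Matrix.det_fin_two] at hdet
  rcases hrow 0 with h₀ | h₀ <;> rcases hrow 1 with h₁ | h₁
  · simp [h₀, h₁] at hdet
  · right; simpa only [h₀, h₁] using g.eta_fin_two
  · left; simpa only [h₀, h₁] using g.eta_fin_two
  · simp [h₀, h₁] at hdet

theorem aut_E2_of_ne_zero_general (F : Type*) [Field F] (b : F) (hb : b ≠ 0) :
    Aut (!![1, 0, 0, b; 1, 0, 0, 0] : Matrix (Fin 2) (Fin 4) F) = {1} := by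
  have hE : (!![1, 0, 0, b; 1, 0, 0, 0] : Matrix (Fin 2) (Fin 4) F) =
      evolutionMSC !![1, b; 1, 0] := rfl
  rw [hE]
  refine Set.Subset.antisymm (fun g haut ↦ ?_) (Set.singleton_subset_iff.mpr (one_mem_aut _))
  have hA : (!![1, b; 1, 0] : Matrix (Fin 2) (Fin 2) F).det ≠ 0 := by simpa using hb
  obtain ⟨hunit, hcol, hsq⟩ := (mem_aut_evolutionMSC_iff hA g).mp haut
  have hdet : g.det ≠ 0 := (g.isUnit_iff_isUnit_det.mp hunit).ne_zero
  rcases eq_diagonal_or_eq_antidiagonal hdet hcol with hg | hg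
  · generalize g 0 0 = p, g 1 1 = s at hg
    subst hg
    have hp : p = p * p := by simpa [Matrix.mul_apply] using congrFun₂ hsq 0 0
    have hs : s = p * p := by simpa [Matrix.mul_apply] using congrFun₂ hsq 1 0
    have hp₀ : p ≠ 0 := by rintro rfl; simp at hdet
    have hp₁ : p = 1 := (mul_eq_left₀ hp₀).mp hp.symm
    simp [hs, hp₁, Matrix.one_fin_two]
  · generalize g 0 1 = q, g 1 0 = r at hg
    subst hg
    have hr : r = 0 := by simpa [Matrix.mul_apply] using congrFun₂ hsq 1 0
    simp [hr] at hdet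

theorem aut_E2_of_ne_zero (F : Type*) [Field F] [IsAlgClosed F] (hchar : ringChar F ≠ 2)
    (b : F) (hb : b ≠ 0) :
    Aut (!![1, 0, 0, b; 1, 0, 0, 0] : Matrix (Fin 2) (Fin 4) F) = {1} :=
  aut_E2_of_ne_zero_general F b hb
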